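/- Let 0 < α < 1/2 and 0 < β < 1/2 with τ(C_α)·τ(C_β) < 1. If log α / log β is irrational, then for every real number λ, C_α − λ·C_β ≠ [−λ, 1]. -/

import Mathlib

/-!
An element of `C_a` below `a ^ m * (1 - a)` is at most `a ^ (m + 1)`, by self-similarity. As `C_α`
is symmetric about `1/2`, a point `1 - s` is in `C_α - l C_β` iff `s = u + l y` with `u ∈ C_α` and
`y ∈ C_β`. For `l > 0` this fails as soon as
`α ^ (m + 1) + l β ^ (n + 1) < s < min (α ^ m (1 - α)) (l β ^ n (1 - β))`.
Such an `s` exists iff `r = l β ^ n / α ^ m` satisfies `α / (1 - 2β) < r < (1 - 2α) / β`. The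
thickness hypothesis says exactly that this range of ratios is nonempty, and irrationality of
`log α / log β` makes the values of `r` dense in the positive reals.
-/

open Set MeasureTheory

/-- The middle Cantor set `C_a`, for `0 < a < 1/2`:
`C_a = { (1-a) * ∑ εₖ aᵏ : εₖ ∈ {0,1} }`. -/
noncomputable def middleCantor (a : ℝ) : Set ℝ :=
  {x : ℝ | ∃ ε : ℕ → Bool, x = (1 - a) * ∑' k : ℕ, (if ε k then a ^ k else 0)}

/-- The arithmetic difference `C_a - l · C_b`. -/
noncomputable def diffSet (a b l : ℝ) : Set ℝ :=
  {z : ℝ | ∃ x ∈ middleCantor a, ∃ y ∈ middleCantor b, z = x - l * y}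

section MiddleCantor

variable {a x : ℝ}

theorem summable_ite_pow (ha : |a| < 1) (ε : ℕ → Bool) :
    Summable fun k ↦ if ε k then a ^ k else 0 := by
  refine ((summable_geometric_of_abs_lt_one ha).indicator {k | ε k}).congr fun k ↦ ?_
  simp [indicator_apply]

theorem zero_mem_middleCantor (a : ℝ) : 0 ∈ middleCantor a :=
  ⟨fun _ ↦ false, by simp⟩

theorem one_sub_mem_middleCantor (ha : |a| < 1) (hx : x ∈ middleCantor a) :
    1 - x ∈ middleCantor a := by
  obtain ⟨ε, rfl⟩ := hx
  have hsum : (∑' k, if ε k then a ^ k else 0) + (∑' k, if !ε k then a ^ k else 0)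
      = (1 - a)⁻¹ := by
    rw [← (summable_ite_pow ha ε).tsum_add (summable_ite_pow ha fun k ↦ !ε k),
      ← tsum_geometric_of_abs_lt_one ha]
    refine tsum_congr fun k ↦ ?_
    cases ε k <;> simp
  refine ⟨fun k ↦ !ε k, sub_eq_of_eq_add' ?_⟩
  rw [← mul_add, hsum, mul_inv_cancel₀ (sub_pos.2 (lt_of_abs_lt ha)).ne']

theorem nonneg_of_mem_middleCantor (ha₀ : 0 ≤ a) (ha₁ : a ≤ 1) (hx : x ∈ middleCantor a) :
    0 ≤ x := by
  obtain ⟨ε, rfl⟩ := hx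
  refine mul_nonneg (sub_nonneg.2 ha₁) (tsum_nonneg fun k ↦ ?_)
  split_ifs <;> positivity

theorem le_one_of_mem_middleCantor (ha₀ : 0 ≤ a) (ha₁ : a < 1) (hx : x ∈ middleCantor a) :
    x ≤ 1 :=
  sub_nonneg.1 <| nonneg_of_mem_middleCantor ha₀ ha₁.le <|
    one_sub_mem_middleCantor (by rwa [abs_of_nonneg ha₀]) hx

theorem exists_mem_middleCantor_eq_mul_or_eq_mul_add (ha : |a| < 1) (hx : x ∈ middleCantor a) :
    ∃ y ∈ middleCantor a, x = a * y ∨ x = a * y + (1 - a) := by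
  obtain ⟨ε, rfl⟩ := hx
  refine ⟨_, ⟨fun k ↦ ε (k + 1), rfl⟩, ?_⟩
  have htail : (∑' k, if ε (k + 1) then a ^ (k + 1) else 0)
      = a * ∑' k, if ε (k + 1) then a ^ k else 0 := by
    simp only [← tsum_mul_left, mul_ite, mul_zero, pow_succ']
  rw [(summable_ite_pow ha ε).tsum_eq_zero_add, htail]
  cases ε 0
  · left
    simp only [Bool.false_eq_true, if_false]
    ring
  · right
    simp only [if_true]
    ring

theorem exists_mem_middleCantor_eq_mul (ha₀ : 0 ≤ a) (ha₁ : a < 1) (hx : x ∈ middleCantor a)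
    (hxa : x < 1 - a) : ∃ y ∈ middleCantor a, x = a * y := by
  obtain ⟨y, hy, hxy | hxy⟩ :=
    exists_mem_middleCantor_eq_mul_or_eq_mul_add (by rwa [abs_of_nonneg ha₀]) hx
  · exact ⟨y, hy, hxy⟩
  · have := mul_nonneg ha₀ (nonneg_of_mem_middleCantor ha₀ ha₁.le hy)
    linarith

theorem le_pow_succ_of_mem_middleCantor (ha₀ : 0 < a) (ha₁ : a < 1) (hx : x ∈ middleCantor a)
    {m : ℕ} (hxm : x < a ^ m * (1 - a)) : x ≤ a ^ (m + 1) := by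
  have hsub : 0 ≤ 1 - a := sub_nonneg.2 ha₁.le
  induction m generalizing x with
  | zero =>
    obtain ⟨y, hy, rfl⟩ := exists_mem_middleCantor_eq_mul ha₀.le ha₁ hx (by simpa using hxm)
    simpa using mul_le_of_le_one_right ha₀.le (le_one_of_mem_middleCantor ha₀.le ha₁ hy)
  | succ m ih =>
    have hxa : x < 1 - a :=
      hxm.trans_le (mul_le_of_le_one_left hsub (pow_le_one₀ ha₀.le ha₁.le))
    obtain ⟨y, hy, rfl⟩ := exists_mem_middleCantor_eq_mul ha₀.le ha₁ hx hxa
    rw [pow_succ', mul_assoc] at hxm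
    rw [pow_succ']
    exact mul_le_mul_of_nonneg_left (ih hy (lt_of_mul_lt_mul_left hxm ha₀.le)) ha₀.le

theorem one_half_notMem_middleCantor (ha₀ : 0 < a) (ha : a < 1 / 2) :
    1 / 2 ∉ middleCantor a := fun hmem ↦ by
  have : 1 / 2 ≤ a ^ (0 + 1) :=
    le_pow_succ_of_mem_middleCantor ha₀ (by linarith) hmem (by rw [pow_zero]; linarith)
  rw [zero_add, pow_one] at this
  linarith

end MiddleCantor

section DiffSet

variable {a b l s : ℝ}

theorem zero_mem_diffSet (a b l : ℝ) : 0 ∈ diffSet a b l :=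
  ⟨0, zero_mem_middleCantor a, 0, zero_mem_middleCantor b, by simp⟩

theorem diffSet_zero_right_subset (a b : ℝ) : diffSet a b 0 ⊆ middleCantor a := by
  rintro _ ⟨x, hx, y, -, rfl⟩
  simpa using hx

theorem one_sub_notMem_diffSet (ha₀ : 0 < a) (ha₁ : a < 1) (hb₀ : 0 < b) (hb₁ : b < 1)
    (hl : 0 ≤ l) {m n : ℕ} (hs : a ^ (m + 1) + l * b ^ (n + 1) < s)
    (hsa : s < a ^ m * (1 - a)) (hsb : s < l * (b ^ n * (1 - b))) :
    1 - s ∉ diffSet a b l := by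
  rintro ⟨x, hx, y, hy, hxy⟩
  have hu : 1 - x ∈ middleCantor a := one_sub_mem_middleCantor (by rwa [abs_of_pos ha₀]) hx
  have hu₀ : 0 ≤ 1 - x := nonneg_of_mem_middleCantor ha₀.le ha₁.le hu
  have hy₀ : 0 ≤ l * y := mul_nonneg hl (nonneg_of_mem_middleCantor hb₀.le hb₁.le hy)
  have hu_le : 1 - x ≤ a ^ (m + 1) :=
    le_pow_succ_of_mem_middleCantor ha₀ ha₁ hu (by linarith)
  have hy_le : y ≤ b ^ (n + 1) :=
    le_pow_succ_of_mem_middleCantor hb₀ hb₁ hy (lt_of_mul_lt_mul_left (by linarith) hl)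
  have hly_le : l * y ≤ l * b ^ (n + 1) := mul_le_mul_of_nonneg_left hy_le hl
  linarith

end DiffSet

section Density

theorem exists_nat_mul_sub_nat_mul_mem_Ioo {a p x y : ℝ} (ha : 0 < a) (hp : 0 < p)
    (hirr : Irrational (a / p)) (hxy : x < y) : ∃ m n : ℕ, m * a - n * p ∈ Ioo x y := by
  have : Fact (0 < p) := ⟨hp⟩
  have hdense : DenseRange (· • (a : AddCircle p) : ℕ → AddCircle p) :=
    denseRange_zsmul_iff_nsmul.1 (AddCircle.denseRange_zsmul_coe_iff.2 hirr)
  -- Shifting the target by `N * a > y` makes it negative, so that the multiple of `p` relating it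
  -- to some `k * a ≥ 0` is positive.
  obtain ⟨N, hN⟩ := exists_nat_gt (y / a)
  rw [div_lt_iff₀ ha] at hN
  have hopen : IsOpen ((↑) '' Ioo (x - N * a) (y - N * a) : Set (AddCircle p)) :=
    QuotientAddGroup.isOpenMap_coe _ isOpen_Ioo
  obtain ⟨k, t, ht, hkt⟩ :=
    hdense.exists_mem_open hopen ((nonempty_Ioo.2 (by linarith)).image _)
  have hcoe : (t : AddCircle p) = (k * a : ℝ) := by
    rw [← nsmul_eq_mul, AddCircle.coe_nsmul]
    exact hkt
  obtain ⟨j, hj⟩ := AddSubgroup.mem_zmultiples_iff.1 (QuotientAddGroup.eq.1 hcoe)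
  rw [zsmul_eq_mul] at hj
  have hj_pos : 0 < (j : ℝ) := by
    have hka : 0 ≤ k * a := by positivity
    refine pos_of_mul_pos_left (b := p) ?_ hp.le
    linarith [ht.2]
  lift j to ℕ using (by exact_mod_cast hj_pos.le)
  rw [Int.cast_natCast] at hj
  refine ⟨k + N, j, ?_, ?_⟩ <;> push_cast <;> linarith [ht.1, ht.2]

theorem exists_pow_div_pow_mem_Ioo {a b x y : ℝ} (ha₀ : 0 < a) (ha₁ : a < 1) (hb₀ : 0 < b)
    (hb₁ : b < 1) (hirr : Irrational (Real.log a / Real.log b)) (hx : 0 < x) (hxy : x < y) :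
    ∃ m n : ℕ, b ^ n / a ^ m ∈ Ioo x y := by
  obtain ⟨m, n, hmn⟩ := exists_nat_mul_sub_nat_mul_mem_Ioo
    (neg_pos.2 (Real.log_neg ha₀ ha₁)) (neg_pos.2 (Real.log_neg hb₀ hb₁))
    (by rwa [neg_div_neg_eq]) (Real.log_lt_log hx hxy)
  have hlog : Real.log (b ^ n / a ^ m) = m * -Real.log a - n * -Real.log b := by
    rw [Real.log_div (by positivity) (by positivity), Real.log_pow, Real.log_pow]
    ring
  rw [← hlog] at hmn
  exact ⟨m, n, (Real.log_lt_log_iff hx (by positivity)).1 hmn.1,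
    (Real.log_lt_log_iff (by positivity) (hx.trans hxy)).1 hmn.2⟩

end Density

section Thickness

variable {a b l : ℝ}

theorem div_one_sub_two_mul_lt_of_thickness_mul_lt_one (ha : a < 1 / 2) (hb₀ : 0 < b)
    (hb : b < 1 / 2) (hτ : a / (1 - 2 * a) * (b / (1 - 2 * b)) < 1) :
    a / (1 - 2 * b) < (1 - 2 * a) / b := by
  have ha' : 0 < 1 - 2 * a := by linarith
  have hb' : 0 < 1 - 2 * b := by linarith
  rw [div_mul_div_comm, div_lt_one (mul_pos ha' hb')] at hτ
  rwa [div_lt_div_iff₀ hb' hb₀]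

theorem exists_pow_succ_add_lt_min (ha₀ : 0 < a) (ha : a < 1 / 2) (hb₀ : 0 < b) (hb : b < 1 / 2)
    (hτ : a / (1 - 2 * a) * (b / (1 - 2 * b)) < 1)
    (hirr : Irrational (Real.log a / Real.log b)) (hl : 0 < l) :
    ∃ m n : ℕ, a ^ (m + 1) + l * b ^ (n + 1) < min (a ^ m * (1 - a)) (l * (b ^ n * (1 - b))) := by
  have hb' : 0 < 1 - 2 * b := by linarith
  have hratio : a / (1 - 2 * b) / l < (1 - 2 * a) / b / l :=
    div_lt_div_of_pos_right (div_one_sub_two_mul_lt_of_thickness_mul_lt_one ha hb₀ hb hτ) hl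
  obtain ⟨m, n, hlower, hupper⟩ := exists_pow_div_pow_mem_Ioo ha₀ (by linarith) hb₀ (by linarith)
    hirr (by positivity) hratio
  rw [div_div, div_lt_div_iff₀ (mul_pos hb' hl) (pow_pos ha₀ m)] at hlower
  rw [div_div, div_lt_div_iff₀ (pow_pos ha₀ m) (mul_pos hb₀ hl)] at hupper
  refine ⟨m, n, lt_min ?_ ?_⟩ <;> rw [pow_succ, pow_succ] <;> linarith

theorem exists_mem_Icc_notMem_diffSet (ha₀ : 0 < a) (ha : a < 1 / 2) (hb₀ : 0 < b)
    (hb : b < 1 / 2) (hτ : a / (1 - 2 * a) * (b / (1 - 2 * b)) < 1)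
    (hirr : Irrational (Real.log a / Real.log b)) (hl : 0 < l) :
    ∃ z ∈ Icc (-l) 1, z ∉ diffSet a b l := by
  have ha₁ : a < 1 := by linarith
  obtain ⟨m, n, hmn⟩ := exists_pow_succ_add_lt_min ha₀ ha hb₀ hb hτ hirr hl
  obtain ⟨s, hs, hs_min⟩ := exists_between hmn
  obtain ⟨hsa, hsb⟩ := lt_min_iff.1 hs_min
  have hs_pos : 0 < s := lt_trans (by positivity) hs
  have hs_lt : s < 1 := hsa.trans_le <|
    mul_le_one₀ (pow_le_one₀ ha₀.le ha₁.le) (by linarith) (by linarith)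
  exact ⟨1 - s, ⟨by linarith, by linarith⟩,
    one_sub_notMem_diffSet ha₀ ha₁ hb₀ (by linarith) hl.le hs hsa hsb⟩

end Thickness

theorem stmt10 (α β : ℝ) (hα0 : 0 < α) (hα : α < 1 / 2) (hβ0 : 0 < β) (hβ : β < 1 / 2)
    (hτ : (α / (1 - 2 * α)) * (β / (1 - 2 * β)) < 1)
    (hirr : Irrational (Real.log α / Real.log β)) :
    ∀ l : ℝ, diffSet α β l ≠ Set.Icc (-l) 1 := by
  intro l heq
  rcases lt_trichotomy l 0 with hl | rfl | hl
  · have hmem : 0 ∈ Icc (-l) 1 := heq ▸ zero_mem_diffSet α β l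
    linarith [hmem.1]
  · have hmem : 1 / 2 ∈ diffSet α β 0 := by
      rw [heq]
      constructor <;> norm_num
    exact one_half_notMem_middleCantor hα0 hα (diffSet_zero_right_subset α β hmem)
  · obtain ⟨z, hz, hz_notMem⟩ := exists_mem_Icc_notMem_diffSet hα0 hα hβ0 hβ hτ hirr hl
    exact hz_notMem (heq ▸ hz)
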